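/- arXiv:2411.07909 — 5 statements merged into one kernel-verified Lean document; each statement's English description precedes it below -/
import Mathlib

section
/- Let q₁, q₂ ∈ ℤ with q₁, q₂ ∉ {−1, 0, 1} and q₁ ≠ q₂. Then the Lehmer pair associated with (1+q₁, 1−3q₁) and the Lehmer pair associated with (1+q₂, 1−3q₂) are not equivalent. -/
open Complex

/-- A fixed choice of complex square root of an integer. -/
noncomputable def csqrt (a : ℤ) : ℂ := (a : ℂ) ^ ((1 : ℂ) / 2)

/-- First component of the Lehmer pair associated with `(a, b)`: `(√a - √b)/2`. -/
noncomputable def assocFst (a b : ℤ) : ℂ := (csqrt a - csqrt b) / 2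

/-- Second component of the Lehmer pair associated with `(a, b)`: `(√a + √b)/2`. -/
noncomputable def assocSnd (a b : ℤ) : ℂ := (csqrt a + csqrt b) / 2

/-- `(α, β)` is a Lehmer pair: `α`, `β` are algebraic integers, `(α+β)^2` and `αβ` are
nonzero coprime rational integers, and `α/β` is not a root of unity. -/
def IsLehmerPair (α β : ℂ) : Prop :=
  IsIntegral ℤ α ∧ IsIntegral ℤ β ∧
  (∃ p q : ℤ, ((α + β) ^ 2 = (p : ℂ)) ∧ (α * β = (q : ℂ)) ∧ p ≠ 0 ∧ q ≠ 0 ∧ IsCoprime p q) ∧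
  ¬ ∃ n : ℕ, 0 < n ∧ (α / β) ^ n = 1

/-- The Lehmer numbers `ũ_n(α, β)`. -/
noncomputable def lehmerU (α β : ℂ) (n : ℕ) : ℂ :=
  if Odd n then (α ^ n - β ^ n) / (α - β) else (α ^ n - β ^ n) / (α ^ 2 - β ^ 2)

/-- `z` is an integer divisible by `ℓ`. -/
def IntDvd (ℓ : ℕ) (z : ℂ) : Prop := ∃ m : ℤ, (m : ℂ) = z ∧ (ℓ : ℤ) ∣ m

/-- `ℓ` is a primitive divisor of `ũ_n(α, β)`: `ℓ` is a prime dividing `ũ_n(α, β)` but not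
dividing `(α^2 - β^2)^2 ũ_1(α,β) ⋯ ũ_{n-1}(α,β)`. -/
def IsPrimitiveDivisor (ℓ : ℕ) (n : ℕ) (α β : ℂ) : Prop :=
  ℓ.Prime ∧ IntDvd ℓ (lehmerU α β n) ∧
  ¬ IntDvd ℓ ((α ^ 2 - β ^ 2) ^ 2 * ∏ i ∈ Finset.Ico 1 n, lehmerU α β i)

/-- `(α, β)` is an `n`-defective Lehmer pair: a Lehmer pair such that `ũ_n(α, β)` has no
primitive divisor. -/
def IsDefective (n : ℕ) (α β : ℂ) : Prop :=
  IsLehmerPair α β ∧ ∀ ℓ : ℕ, ¬ IsPrimitiveDivisor ℓ n α β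

/-- Two Lehmer pairs `(α₁, β₁)` and `(α₂, β₂)` are equivalent if
`α₁/α₂ = β₁/β₂ ∈ {1, -1, i, -i}`. -/
def LehmerEquiv (α₁ β₁ α₂ β₂ : ℂ) : Prop :=
  ∃ c : ℂ, (c = 1 ∨ c = -1 ∨ c = Complex.I ∨ c = -Complex.I) ∧ α₁ = c * α₂ ∧ β₁ = c * β₂

/-- `phiAux n = φ_{n-2}`: the Fibonacci sequence shifted so as to start at index `-2`. -/
def phiAux : ℕ → ℤ
  | 0 => -1
  | 1 => 1
  | n + 2 => phiAux (n + 1) + phiAux n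

/-- `φ_k` for integer `k ≥ -2`: `φ_{-2} = -1`, `φ_{-1} = 1`, `φ_{k+1} = φ_k + φ_{k-1}`. -/
def phi (k : ℤ) : ℤ := phiAux (k + 2).toNat

/-- `psiAux n = ψ_{n-2}`: the Lucas sequence shifted so as to start at index `-2`. -/
def psiAux : ℕ → ℤ
  | 0 => 3
  | 1 => -1
  | n + 2 => psiAux (n + 1) + psiAux n

/-- `ψ_k` for integer `k ≥ -2`: `ψ_{-2} = 3`, `ψ_{-1} = -1`, `ψ_{k+1} = ψ_k + ψ_{k-1}`. -/
def psi (k : ℤ) : ℤ := psiAux (k + 2).toNat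

/-- `piAux n = π_{n-1}`. -/
def piAux : ℕ → ℤ
  | 0 => 1
  | 1 => 0
  | n + 2 => 2 * piAux (n + 1) + piAux n

/-- `π_k` for integer `k ≥ -1`: `π_{-1} = 1`, `π_0 = 0`, `π_{k+1} = 2π_k + π_{k-1}`. -/
def piSeq (k : ℤ) : ℤ := piAux (k + 1).toNat

/-- `rhoAux n = ρ_{n-1}`. -/
def rhoAux : ℕ → ℤ
  | 0 => -1
  | 1 => 1
  | n + 2 => 2 * rhoAux (n + 1) + rhoAux n

/-- `ρ_k` for integer `k ≥ -1`: `ρ_{-1} = -1`, `ρ_0 = 1`, `ρ_{k+1} = 2ρ_k + ρ_{k-1}`. -/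
def rhoSeq (k : ℤ) : ℤ := rhoAux (k + 1).toNat

/-- `zetaAux i n = ζ^{(i)}_{n-1}`. -/
def zetaAux (i : ℕ) : ℕ → ℤ
  | 0 => if i = 0 then -1 else if i = 1 then 2 else if i = 2 then 1 else -1
  | 1 => if i = 0 then 0 else 1
  | n + 2 => 4 * zetaAux i (n + 1) - zetaAux i n

/-- `ζ^{(i)}_k` for integer `k ≥ -1`, satisfying `ζ^{(i)}_{k+1} = 4ζ^{(i)}_k - ζ^{(i)}_{k-1}`
with initial values `(ζ^{(i)}_{-1}, ζ^{(i)}_0)` equal to `(-1, 0)`, `(2, 1)`, `(1, 1)`,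
`(-1, 1)` for `i = 0, 1, 2, 3` respectively. -/
def zeta (i : ℕ) (k : ℤ) : ℤ := zetaAux i (k + 1).toNat

/-! Adding and subtracting the two components of an associated pair recovers `√a` and `√b`, so
scaling the pair by `c` scales `(a, b)` by `c ^ 2`. Since `3 (1 + q) + (1 - 3 q) = 4` for every `q`,
such a scaling between two members of the family must satisfy `c ^ 2 = 1`, and then the first
entries agree. -/

theorem csqrt_sq (a : ℤ) : csqrt a ^ 2 = a := by
  rw [csqrt, one_div, cpow_ofNat_inv_pow]

theorem assocFst_add_assocSnd (a b : ℤ) : assocFst a b + assocSnd a b = csqrt a := by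
  unfold assocFst assocSnd
  ring

theorem assocSnd_sub_assocFst (a b : ℤ) : assocSnd a b - assocFst a b = csqrt b := by
  unfold assocFst assocSnd
  ring

theorem eq_sq_mul_of_assoc_eq_mul {a b a' b' : ℤ} {c : ℂ}
    (hfst : assocFst a b = c * assocFst a' b') (hsnd : assocSnd a b = c * assocSnd a' b') :
    (a : ℂ) = c ^ 2 * a' ∧ (b : ℂ) = c ^ 2 * b' := by
  have sqrt_a : csqrt a = c * csqrt a' := by
    rw [← assocFst_add_assocSnd a b, ← assocFst_add_assocSnd a' b', hfst, hsnd, mul_add]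
  have sqrt_b : csqrt b = c * csqrt b' := by
    rw [← assocSnd_sub_assocFst a b, ← assocSnd_sub_assocFst a' b', hfst, hsnd, mul_sub]
  constructor
  · rw [← csqrt_sq, sqrt_a, mul_pow, csqrt_sq]
  · rw [← csqrt_sq, sqrt_b, mul_pow, csqrt_sq]

theorem three_defective_first_family_inequiv_general {q₁ q₂ : ℤ} (hne : q₁ ≠ q₂) :
    ¬ ∃ c : ℂ,
      assocFst (1 + q₁) (1 - 3 * q₁) = c * assocFst (1 + q₂) (1 - 3 * q₂) ∧
      assocSnd (1 + q₁) (1 - 3 * q₁) = c * assocSnd (1 + q₂) (1 - 3 * q₂) := by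
  rintro ⟨c, hfst, hsnd⟩
  obtain ⟨ha, hb⟩ := eq_sq_mul_of_assoc_eq_mul hfst hsnd
  push_cast at ha hb
  have c_sq : c ^ 2 = 1 := by linear_combination -(3 * ha + hb) / 4
  have q_eq : (q₁ : ℂ) = q₂ := by
    rw [c_sq, one_mul] at ha
    exact add_left_cancel ha
  exact hne (by exact_mod_cast q_eq)

theorem three_defective_first_family_inequiv (q₁ q₂ : ℤ)
    (h₁ : q₁ ≠ -1 ∧ q₁ ≠ 0 ∧ q₁ ≠ 1) (h₂ : q₂ ≠ -1 ∧ q₂ ≠ 0 ∧ q₂ ≠ 1)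
    (hne : q₁ ≠ q₂) :
    ¬ LehmerEquiv (assocFst (1 + q₁) (1 - 3 * q₁)) (assocSnd (1 + q₁) (1 - 3 * q₁))
      (assocFst (1 + q₂) (1 - 3 * q₂)) (assocSnd (1 + q₂) (1 - 3 * q₂)) := by
  rintro ⟨c, -, hfst, hsnd⟩
  exact three_defective_first_family_inequiv_general hne ⟨c, hfst, hsnd⟩
end

section
/- Let k₁, k₂, q₁, q₂ ∈ ℤ with k₁, k₂ ≥ 1, 3 ∤ q₁, 3 ∤ q₂, (k₁,q₁) ≠ (1,1), (k₂,q₂) ≠ (1,1) and (k₁,q₁) ≠ (k₂,q₂). Then the Lehmer pair associated with (3^{k₁}+q₁, 3^{k₁}−3q₁) and the Lehmer pair associated with (3^{k₂}+q₂, 3^{k₂}−3q₂) are not equivalent. -/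
open Complex

theorem assocFst_add_assocSnd_sq (a b : ℤ) : (assocFst a b + assocSnd a b) ^ 2 = a := by
  rw [← csqrt_sq a, assocFst, assocSnd]
  ring

theorem assocFst_sub_assocSnd_sq (a b : ℤ) : (assocFst a b - assocSnd a b) ^ 2 = b := by
  rw [← csqrt_sq b, assocFst, assocSnd]
  ring

theorem LehmerEquiv.sq_eq_or_sq_eq_neg {α₁ β₁ α₂ β₂ : ℂ} (h : LehmerEquiv α₁ β₁ α₂ β₂) :
    ((α₁ + β₁) ^ 2 = (α₂ + β₂) ^ 2 ∧ (α₁ - β₁) ^ 2 = (α₂ - β₂) ^ 2) ∨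
      ((α₁ + β₁) ^ 2 = -(α₂ + β₂) ^ 2 ∧ (α₁ - β₁) ^ 2 = -(α₂ - β₂) ^ 2) := by
  obtain ⟨c, hc, rfl, rfl⟩ := h
  have hc_sq : c ^ 2 = 1 ∨ c ^ 2 = -1 := by
    rcases hc with rfl | rfl | rfl | rfl <;> simp
  simp only [← mul_add, ← mul_sub, mul_pow]
  refine hc_sq.imp (fun h_one ↦ ?_) fun h_neg_one ↦ ?_
  · simp only [h_one, one_mul, and_self]
  · simp only [h_neg_one, neg_one_mul, and_self]

theorem eq_or_eq_neg_of_lehmerEquiv_assoc {a₁ b₁ a₂ b₂ : ℤ}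
    (h : LehmerEquiv (assocFst a₁ b₁) (assocSnd a₁ b₁) (assocFst a₂ b₂) (assocSnd a₂ b₂)) :
    (a₁ = a₂ ∧ b₁ = b₂) ∨ (a₁ = -a₂ ∧ b₁ = -b₂) := by
  have h_sq := h.sq_eq_or_sq_eq_neg
  simp only [assocFst_add_assocSnd_sq, assocFst_sub_assocSnd_sq] at h_sq
  exact_mod_cast h_sq

theorem eq_and_eq_of_lehmerEquiv_assoc_add_sub_mul {d m₁ m₂ q₁ q₂ : ℤ}
    (hd : d + 1 ≠ 0) (hm : m₁ + m₂ ≠ 0)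
    (h : LehmerEquiv (assocFst (m₁ + q₁) (m₁ - d * q₁)) (assocSnd (m₁ + q₁) (m₁ - d * q₁))
      (assocFst (m₂ + q₂) (m₂ - d * q₂)) (assocSnd (m₂ + q₂) (m₂ - d * q₂))) :
    m₁ = m₂ ∧ q₁ = q₂ := by
  rcases eq_or_eq_neg_of_lehmerEquiv_assoc h with ⟨ha, hb⟩ | ⟨ha, hb⟩
  · have hm_eq : m₁ = m₂ := mul_left_cancel₀ hd (by linear_combination d * ha + hb)
    exact ⟨hm_eq, by linarith⟩
  · have h_mul : (d + 1) * (m₁ + m₂) = 0 := by linear_combination d * ha + hb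
    exact absurd h_mul (mul_ne_zero hd hm)

theorem three_defective_second_family_inequiv_general (k₁ k₂ : ℕ) (q₁ q₂ : ℤ)
    (hne : ¬ (k₁ = k₂ ∧ q₁ = q₂)) :
    ¬ LehmerEquiv (assocFst (3 ^ k₁ + q₁) (3 ^ k₁ - 3 * q₁))
      (assocSnd (3 ^ k₁ + q₁) (3 ^ k₁ - 3 * q₁))
      (assocFst (3 ^ k₂ + q₂) (3 ^ k₂ - 3 * q₂))
      (assocSnd (3 ^ k₂ + q₂) (3 ^ k₂ - 3 * q₂)) := by
  intro h
  obtain ⟨h_pow, hq⟩ := eq_and_eq_of_lehmerEquiv_assoc_add_sub_mul (by norm_num) (by positivity) h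
  exact hne ⟨Int.pow_right_injective (by norm_num) h_pow, hq⟩

theorem three_defective_second_family_inequiv (k₁ k₂ : ℕ) (q₁ q₂ : ℤ)
    (hk₁ : 1 ≤ k₁) (hk₂ : 1 ≤ k₂) (hq₁ : ¬ (3 ∣ q₁)) (hq₂ : ¬ (3 ∣ q₂))
    (he₁ : ¬ (k₁ = 1 ∧ q₁ = 1)) (he₂ : ¬ (k₂ = 1 ∧ q₂ = 1))
    (hne : ¬ (k₁ = k₂ ∧ q₁ = q₂)) :
    ¬ LehmerEquiv (assocFst (3 ^ k₁ + q₁) (3 ^ k₁ - 3 * q₁))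
      (assocSnd (3 ^ k₁ + q₁) (3 ^ k₁ - 3 * q₁))
      (assocFst (3 ^ k₂ + q₂) (3 ^ k₂ - 3 * q₂))
      (assocSnd (3 ^ k₂ + q₂) (3 ^ k₂ - 3 * q₂)) :=
  three_defective_second_family_inequiv_general k₁ k₂ q₁ q₂ hne
end

section
/- For every integer k ≥ 1, one has ζ^{(3)}_{k−1} < ζ^{(1)}_k < ζ^{(2)}_k < ζ^{(0)}_{k+1} < ζ^{(3)}_k. -/
open Complex

/-!
Every solution of `u_{k+1} = 4u_k - u_{k-1}` is a combination of `ζ^{(0)}` and its shift, with the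
two initial values of `u` as coefficients. Writing `z = ζ^{(0)}`, this gives
`ζ^{(1)}_k = z_{k+1} - 2z_k`, `ζ^{(2)}_k = z_{k+1} - z_k` and `ζ^{(3)}_k = z_{k+1} + z_k`, so that
the four successive gaps in the chain are `z_k - 2z_{k-1}`, `z_k`, `z_k` and `z_k`. They are
positive because `z_0 = 0`, `z_1 = 1` and `2z_k < z_{k+1}` propagates along the recurrence.
-/

theorem eq_zetaAux_smul_sub_of_recurrence {M : Type*} [AddCommGroup M] {u : ℕ → M}
    (hu : ∀ n, u (n + 2) = (4 : ℤ) • u (n + 1) - u n) (n : ℕ) :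
    u n = zetaAux 0 (n + 1) • u 1 - zetaAux 0 n • u 0 := by
  induction n using Nat.twoStepInduction with
  | zero => simp [zetaAux]
  | one => simp [zetaAux]
  | more n ih ih_succ =>
    have hz (m : ℕ) : zetaAux 0 (m + 2) = 4 * zetaAux 0 (m + 1) - zetaAux 0 m := rfl
    rw [hu, ih_succ, ih, hz (n + 1), hz n]
    module

theorem nonneg_and_two_mul_lt_of_recurrence {R : Type*} [CommRing R] [LinearOrder R]
    [IsStrictOrderedRing R] {u : ℕ → R} (hu : ∀ n, u (n + 2) = 4 * u (n + 1) - u n)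
    (h_nonneg : 0 ≤ u 0) (h_lt : 2 * u 0 < u 1) (n : ℕ) :
    0 ≤ u n ∧ 2 * u n < u (n + 1) := by
  induction n with
  | zero => exact ⟨h_nonneg, h_lt⟩
  | succ n ih =>
    obtain ⟨ih_nonneg, ih_lt⟩ := ih
    have h_succ : 0 ≤ u (n + 1) := by linarith
    exact ⟨h_succ, by linarith [hu n]⟩

theorem zeta_natCast_sub_one (i n : ℕ) : zeta i (n - 1) = zetaAux i n := by
  simp [zeta]

theorem zeta_natCast (i n : ℕ) : zeta i n = zetaAux i (n + 1) := by
  simp [zeta]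

theorem zeta_add_one (i : ℕ) {k : ℤ} (hk : 0 ≤ k) :
    zeta i (k + 1) = 4 * zeta i k - zeta i (k - 1) := by
  lift k to ℕ using hk
  rw [← Nat.cast_succ, zeta_natCast, zeta_natCast, zeta_natCast_sub_one]
  rfl

theorem zeta_eq_mul_sub_mul (i : ℕ) {k : ℤ} (hk : -1 ≤ k) :
    zeta i k = zeta i 0 * zeta 0 (k + 1) - zeta i (-1) * zeta 0 k := by
  obtain ⟨n, rfl⟩ : ∃ n : ℕ, k = n - 1 := ⟨(k + 1).toNat, by lia⟩
  have h : zetaAux i n = zetaAux 0 (n + 1) * zetaAux i 1 - zetaAux 0 n * zetaAux i 0 :=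
    eq_zetaAux_smul_sub_of_recurrence (fun _ ↦ rfl) n
  rw [sub_add_cancel, zeta_natCast_sub_one, zeta_natCast_sub_one, zeta_natCast, h]
  simp only [zeta, neg_add_cancel, zero_add, Int.toNat_zero, Int.toNat_one]
  ring

theorem zeta_one_eq {k : ℤ} (hk : -1 ≤ k) : zeta 1 k = zeta 0 (k + 1) - 2 * zeta 0 k := by
  simpa [zeta, zetaAux] using zeta_eq_mul_sub_mul 1 hk

theorem zeta_two_eq {k : ℤ} (hk : -1 ≤ k) : zeta 2 k = zeta 0 (k + 1) - zeta 0 k := by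
  simpa [zeta, zetaAux] using zeta_eq_mul_sub_mul 2 hk

theorem zeta_three_eq {k : ℤ} (hk : -1 ≤ k) : zeta 3 k = zeta 0 (k + 1) + zeta 0 k := by
  simpa [zeta, zetaAux] using zeta_eq_mul_sub_mul 3 hk

theorem zeta_zero_nonneg_and_two_mul_lt {k : ℤ} (hk : 0 ≤ k) :
    0 ≤ zeta 0 k ∧ 2 * zeta 0 k < zeta 0 (k + 1) := by
  lift k to ℕ using hk
  rw [← Nat.cast_succ, zeta_natCast, zeta_natCast]
  exact nonneg_and_two_mul_lt_of_recurrence (u := fun n ↦ zetaAux 0 (n + 1))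
    (fun _ ↦ rfl) (by simp [zetaAux]) (by simp [zetaAux]) k

theorem zeta_interlacing (k : ℤ) (hk : 1 ≤ k) :
    zeta 3 (k - 1) < zeta 1 k ∧ zeta 1 k < zeta 2 k ∧
      zeta 2 k < zeta 0 (k + 1) ∧ zeta 0 (k + 1) < zeta 3 k := by
  have h_prev : zeta 3 (k - 1) = zeta 0 k + zeta 0 (k - 1) := by
    simpa using zeta_three_eq (k := k - 1) (by lia)
  have h_rec : zeta 0 (k + 1) = 4 * zeta 0 k - zeta 0 (k - 1) := zeta_add_one 0 (by lia)
  obtain ⟨h_nonneg, h_double⟩ : 0 ≤ zeta 0 (k - 1) ∧ 2 * zeta 0 (k - 1) < zeta 0 k := by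
    simpa using zeta_zero_nonneg_and_two_mul_lt (k := k - 1) (by lia)
  have h_pos : 0 < zeta 0 k := by linarith
  rw [h_prev, zeta_one_eq (by lia), zeta_two_eq (by lia), zeta_three_eq (by lia)]
  exact ⟨by linarith, by linarith [h_pos], sub_lt_self _ h_pos, lt_add_of_pos_right _ h_pos⟩
end

section
/- For every integer k ≥ 3 and ε = ±1, the Lehmer pair associated with (a,b) = (φ_{k−2ε}, φ_{k−2ε} − 4φ_k) is a 5-defective Lehmer pair; and for every integer k ≥ 0 and ε = ±1 with (k,ε) ∉ {(0,−1), (1,−1)}, the Lehmer pair associated with (a,b) = (ψ_{k−2ε}, ψ_{k−2ε} − 4ψ_k) is a 5-defective Lehmer pair. -/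
open Complex

/-!
Put `p = (α + β)²` and `q = αβ`. Then `ũ₅(α, β) = p² - 3pq + q²`, and this form is multiplied by
`-1` when a sequence satisfying the Fibonacci recurrence is shifted in `(p, q) = (u n, u (n + 2))`.
It is therefore `±1` along `φ` and `±5` along `ψ`. In both cases it is squarefree, which makes `p`
and `q` coprime, and its only possible prime divisor is `5`. This prime is never primitive, because
`p² - 3pq + q² ≡ (p - 4q)² (mod 5)` and `(α² - β²)² = p (p - 4q)`.

If `α / β` is a root of unity, then `p / q - 2 = α / β + β / α` is a rational integer in `[-2, 2]`,
so `q ∣ p`. By coprimality this leaves only `q = ±1` with `0 ≤ pq ≤ 4`.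
-/

theorem isIntegral_left_of_add_of_mul {R A : Type*} [CommRing R] [CommRing A] [Algebra R A]
    {x y : A} (hadd : IsIntegral R (x + y)) (hmul : IsIntegral R (x * y)) : IsIntegral R x := by
  let s : integralClosure R A := ⟨x + y, hadd⟩
  let t : integralClosure R A := ⟨x * y, hmul⟩
  have hx : IsIntegral (integralClosure R A) x := by
    refine ⟨Polynomial.X ^ 2 - Polynomial.C s * Polynomial.X + Polynomial.C t, by monicity!, ?_⟩
    have hroot : x ^ 2 - (x + y) * x + x * y = 0 := by ring
    simpa [s, t] using hroot
  exact isIntegral_trans x hx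

theorem exists_int_add_inv_eq_of_pow_eq_one {z : ℂ} {n : ℕ} (hn : n ≠ 0) (hz : z ^ n = 1) {r : ℚ}
    (hr : z + z⁻¹ = r) : ∃ t : ℤ, |t| ≤ 2 ∧ z + z⁻¹ = t := by
  have hz_inv : z⁻¹ ^ n = 1 := by rw [inv_pow, hz, inv_one]
  have hint : IsIntegral ℤ (z + z⁻¹) :=
    (IsIntegral.of_pow hn.pos (hz ▸ isIntegral_one)).add
      (IsIntegral.of_pow hn.pos (hz_inv ▸ isIntegral_one))
  obtain ⟨t, ht⟩ := hint.exists_int_iff_exists_rat.1 ⟨r, hr⟩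
  have hnorm : ‖(t : ℂ)‖ ≤ 2 := calc
    ‖(t : ℂ)‖ ≤ ‖z‖ + ‖z⁻¹‖ := ht ▸ norm_add_le z z⁻¹
    _ = 2 := by
      rw [norm_eq_one_of_pow_eq_one hz hn, norm_eq_one_of_pow_eq_one hz_inv hn]; norm_num
  rw [norm_intCast] at hnorm
  exact ⟨t, mod_cast hnorm, ht⟩

theorem isRelPrime_of_squarefree_quadratic {R : Type*} [CommSemiring R] {a b c x y : R}
    (h : Squarefree (a * x ^ 2 + b * x * y + c * y ^ 2)) : IsRelPrime x y := by
  rintro g ⟨x, rfl⟩ ⟨y, rfl⟩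
  exact h g ⟨a * x ^ 2 + b * x * y + c * y ^ 2, by ring⟩

theorem sq_sub_three_mul_add_sq_of_fib_rec {R : Type*} [CommRing R] {u : ℕ → R}
    (hu : ∀ n, u (n + 2) = u (n + 1) + u n) (n : ℕ) :
    u n ^ 2 - 3 * u n * u (n + 2) + u (n + 2) ^ 2 =
      (-1) ^ n * (u 0 ^ 2 - 3 * u 0 * u 2 + u 2 ^ 2) := by
  induction n with
  | zero => simp
  | succ n ih =>
    have hsucc : u (n + 3) = u (n + 2) + u (n + 1) := hu (n + 1)
    rw [hu n] at ih
    rw [hsucc, hu n]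
    linear_combination -ih

theorem le_of_fib_rec {M : Type*} [AddCommMonoid M] [PartialOrder M] [IsOrderedAddMonoid M]
    {u : ℕ → M} (hu : ∀ n, u (n + 2) = u (n + 1) + u n) {c : M} (hc : 0 ≤ c) {m n : ℕ}
    (hm : c ≤ u m) (hm' : c ≤ u (m + 1)) (hmn : m ≤ n) : c ≤ u n := by
  suffices h : c ≤ u n ∧ c ≤ u (n + 1) from h.1
  induction n, hmn using Nat.le_induction with
  | base => exact ⟨hm, hm'⟩
  | succ n _ ih => exact ⟨ih.2, hu n ▸ le_add_of_le_of_nonneg ih.2 (hc.trans ih.1)⟩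

section LehmerPair

variable {α β : ℂ} {p q : ℤ}

theorem exists_mem_Icc_eq_mul_of_div_pow_eq_one (hp : (α + β) ^ 2 = p) (hq : α * β = q)
    (hq0 : q ≠ 0) {n : ℕ} (hn : n ≠ 0) (hroot : (α / β) ^ n = 1) :
    ∃ m ∈ Set.Icc (0 : ℤ) 4, p = m * q := by
  have hq0' : (q : ℂ) ≠ 0 := mod_cast hq0
  have hα : α ≠ 0 := left_ne_zero_of_mul (hq ▸ hq0')
  have hβ : β ≠ 0 := right_ne_zero_of_mul (hq ▸ hq0')
  have hsum : α / β + (α / β)⁻¹ = p / q - 2 := by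
    rw [← hp, ← hq]
    field
  obtain ⟨t, ht, htsum⟩ :=
    exists_int_add_inv_eq_of_pow_eq_one hn hroot (r := p / q - 2) (by rw [hsum]; push_cast; rfl)
  refine ⟨t + 2, ?_, ?_⟩
  · rw [abs_le] at ht
    constructor <;> linarith
  · have : (p : ℂ) = (t + 2) * q := by
      rw [← htsum, hsum]
      field
    exact mod_cast this

theorem isLehmerPair_of_isCoprime (hp : (α + β) ^ 2 = p) (hq : α * β = q) (hq0 : q ≠ 0)
    (hcop : IsCoprime p q) (hunit : IsUnit q → p * q ∉ Set.Icc 0 4) : IsLehmerPair α β := by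
  have hne : ∀ m ∈ Set.Icc (0 : ℤ) 4, p ≠ m * q := by
    rintro m hm rfl
    have hq_unit : IsUnit q := hcop.isUnit_of_dvd' (dvd_mul_left q m) dvd_rfl
    apply hunit hq_unit
    rwa [mul_assoc, Int.isUnit_mul_self hq_unit, mul_one]
  have hadd : IsIntegral ℤ (α + β) := .of_pow two_pos (hp ▸ isIntegral_algebraMap)
  have hmul : IsIntegral ℤ (α * β) := hq ▸ isIntegral_algebraMap
  refine ⟨isIntegral_left_of_add_of_mul hadd hmul,
    isIntegral_left_of_add_of_mul (add_comm α β ▸ hadd) (mul_comm α β ▸ hmul),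
    ⟨p, q, hp, hq, by simpa using hne 0, hq0, hcop⟩, ?_⟩
  rintro ⟨n, hn, hroot⟩
  obtain ⟨m, hm, hpm⟩ := exists_mem_Icc_eq_mul_of_div_pow_eq_one hp hq hq0 hn.ne' hroot
  exact hne m hm hpm

theorem IsLehmerPair.sq_ne_sq (h : IsLehmerPair α β) : α ^ 2 ≠ β ^ 2 := by
  obtain ⟨-, -, ⟨p, q, -, hq, -, hq0, -⟩, hroot⟩ := h
  have hαβ : α * β ≠ 0 := by rw [hq]; exact mod_cast hq0
  have hβ : β ≠ 0 := right_ne_zero_of_mul hαβ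
  exact fun hsq ↦ hroot ⟨2, two_pos, by rw [div_pow, hsq, div_self (pow_ne_zero 2 hβ)]⟩

end LehmerPair

section LehmerNumbers

variable {α β : ℂ}

theorem lehmerU_one (h : α ≠ β) : lehmerU α β 1 = 1 := by
  rw [lehmerU, if_pos (by decide), pow_one, pow_one, div_self (sub_ne_zero.2 h)]

theorem lehmerU_two (h : α ^ 2 ≠ β ^ 2) : lehmerU α β 2 = 1 := by
  rw [lehmerU, if_neg (by decide), div_self (sub_ne_zero.2 h)]

theorem lehmerU_three (h : α ≠ β) : lehmerU α β 3 = (α + β) ^ 2 - α * β := by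
  rw [lehmerU, if_pos (by decide), div_eq_iff (sub_ne_zero.2 h)]
  ring

theorem lehmerU_four (h : α ^ 2 ≠ β ^ 2) : lehmerU α β 4 = (α + β) ^ 2 - 2 * (α * β) := by
  rw [lehmerU, if_neg (by decide), div_eq_iff (sub_ne_zero.2 h)]
  ring

theorem lehmerU_five (h : α ≠ β) :
    lehmerU α β 5 = ((α + β) ^ 2) ^ 2 - 3 * (α + β) ^ 2 * (α * β) + (α * β) ^ 2 := by
  rw [lehmerU, if_pos (by decide), div_eq_iff (sub_ne_zero.2 h)]
  ring

theorem prod_Ico_one_five_lehmerU (h : α ^ 2 ≠ β ^ 2) :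
    ∏ i ∈ Finset.Ico 1 5, lehmerU α β i =
      ((α + β) ^ 2 - α * β) * ((α + β) ^ 2 - 2 * (α * β)) := by
  have hne : α ≠ β := ne_of_apply_ne (· ^ 2) h
  simp [Finset.prod_Ico_succ_top, lehmerU_one hne, lehmerU_two h, lehmerU_three hne,
    lehmerU_four h]

end LehmerNumbers

section PrimitiveDivisors

theorem intDvd_intCast_iff {ℓ : ℕ} {m : ℤ} : IntDvd ℓ (m : ℂ) ↔ (ℓ : ℤ) ∣ m := by
  simp [IntDvd]

theorem five_dvd_sub_four_mul {p q : ℤ} (h : 5 ∣ p ^ 2 - 3 * p * q + q ^ 2) : 5 ∣ p - 4 * q := by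
  have hsq : 5 ∣ (p - 4 * q) ^ 2 := by
    have heq : (p - 4 * q) ^ 2 = p ^ 2 - 3 * p * q + q ^ 2 + 5 * (3 * q ^ 2 - p * q) := by ring
    exact heq ▸ h.add (dvd_mul_right 5 _)
  exact (Nat.prime_iff_prime_int.1 Nat.prime_five).dvd_of_dvd_pow hsq

variable {α β : ℂ} {p q : ℤ}

theorem IsLehmerPair.lehmerU_five_eq_intCast (h : IsLehmerPair α β) (hp : (α + β) ^ 2 = p)
    (hq : α * β = q) : lehmerU α β 5 = (p ^ 2 - 3 * p * q + q ^ 2 : ℤ) := by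
  rw [lehmerU_five (ne_of_apply_ne (· ^ 2) h.sq_ne_sq), hp, hq]
  push_cast
  rfl

theorem IsLehmerPair.not_isPrimitiveDivisor_five_five (h : IsLehmerPair α β) :
    ¬ IsPrimitiveDivisor 5 5 α β := by
  obtain ⟨p, q, hp, hq, -⟩ := h.2.2.1
  rintro ⟨-, hdvd, hnot⟩
  rw [h.lehmerU_five_eq_intCast hp hq, intDvd_intCast_iff] at hdvd
  have hdisc : (α ^ 2 - β ^ 2) ^ 2 = p * (p - 4 * q) := by rw [← hp, ← hq]; ring
  have hprod : (α ^ 2 - β ^ 2) ^ 2 * ∏ i ∈ Finset.Ico 1 5, lehmerU α β i =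
      (p * (p - 4 * q) * ((p - q) * (p - 2 * q)) : ℤ) := by
    rw [prod_Ico_one_five_lehmerU h.sq_ne_sq, hdisc, hp, hq]
    push_cast
    rfl
  rw [hprod, intDvd_intCast_iff] at hnot
  exact hnot (((five_dvd_sub_four_mul hdvd).mul_left p).mul_right _)

theorem IsLehmerPair.isDefective_five (h : IsLehmerPair α β) (hp : (α + β) ^ 2 = p)
    (hq : α * β = q) (hd : p ^ 2 - 3 * p * q + q ^ 2 ∣ 5) : IsDefective 5 α β := by
  refine ⟨h, fun ℓ hℓ ↦ ?_⟩
  have hdvd := hℓ.2.1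
  rw [h.lehmerU_five_eq_intCast hp hq, intDvd_intCast_iff] at hdvd
  have hℓ_dvd : ℓ ∣ 5 := mod_cast hdvd.trans hd
  obtain rfl : ℓ = 5 := (Nat.prime_dvd_prime_iff_eq hℓ.1 Nat.prime_five).1 hℓ_dvd
  exact h.not_isPrimitiveDivisor_five_five hℓ

end PrimitiveDivisors

theorem assocFst_mul_assocSnd (a b : ℤ) : assocFst a b * assocSnd a b = (a - b) / 4 := by
  rw [assocFst, assocSnd, ← csqrt_sq a, ← csqrt_sq b]
  ring

theorem isDefective_five_assoc {p q : ℤ} (hd : p ^ 2 - 3 * p * q + q ^ 2 ∣ 5) (hq0 : q ≠ 0)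
    (hunit : IsUnit q → p * q ∉ Set.Icc 0 4) :
    IsDefective 5 (assocFst p (p - 4 * q)) (assocSnd p (p - 4 * q)) := by
  have hsqfree : Squarefree (1 * p ^ 2 + (-3) * p * q + 1 * q ^ 2) := by
    convert (Nat.prime_iff_prime_int.1 Nat.prime_five).squarefree.squarefree_of_dvd hd using 1
    ring
  have hcop : IsCoprime p q := (isRelPrime_of_squarefree_quadratic hsqfree).isCoprime
  have hp : (assocFst p (p - 4 * q) + assocSnd p (p - 4 * q)) ^ 2 = p :=
    assocFst_add_assocSnd_sq _ _
  have hq : assocFst p (p - 4 * q) * assocSnd p (p - 4 * q) = q := by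
    rw [assocFst_mul_assocSnd]
    push_cast
    ring
  exact (isLehmerPair_of_isCoprime hp hq hq0 hcop hunit).isDefective_five hp hq hd

theorem isDefective_five_assoc_of_fib_rec {u : ℕ → ℤ} (hu : ∀ n, u (n + 2) = u (n + 1) + u n)
    (hd : u 0 ^ 2 - 3 * u 0 * u 2 + u 2 ^ 2 ∣ 5) {m n : ℕ} (hmn : n = m + 2 ∨ m = n + 2)
    (hn : u n ≠ 0) (hunit : IsUnit (u n) → u m * u n ∉ Set.Icc 0 4) :
    IsDefective 5 (assocFst (u m) (u m - 4 * u n)) (assocSnd (u m) (u m - 4 * u n)) := by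
  have hform (i : ℕ) : u i ^ 2 - 3 * u i * u (i + 2) + u (i + 2) ^ 2 ∣ 5 := by
    rw [sq_sub_three_mul_add_sq_of_fib_rec hu]
    exact ((isUnit_neg_one.pow i).mul_left_dvd).2 hd
  refine isDefective_five_assoc ?_ hn hunit
  rcases hmn with rfl | rfl
  · exact hform m
  · convert hform n using 1
    ring

theorem two_le_phi {k : ℤ} (hk : 3 ≤ k) : 2 ≤ phi k :=
  le_of_fib_rec (m := 5) (fun _ ↦ rfl) zero_le_two (by decide) (by decide) (by omega)

theorem two_le_psi {k : ℤ} (hk : 0 ≤ k) (hk1 : k ≠ 1) : 2 ≤ psi k := by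
  obtain rfl | hk2 : k = 0 ∨ 2 ≤ k := by omega
  · decide
  · exact le_of_fib_rec (m := 4) (fun _ ↦ rfl) zero_le_two (by decide) (by decide) (by omega)

theorem five_defective_families_are_defective :
    (∀ k ε : ℤ, (ε = 1 ∨ ε = -1) → 3 ≤ k →
      IsDefective 5 (assocFst (phi (k - 2 * ε)) (phi (k - 2 * ε) - 4 * phi k))
        (assocSnd (phi (k - 2 * ε)) (phi (k - 2 * ε) - 4 * phi k))) ∧
    (∀ k ε : ℤ, (ε = 1 ∨ ε = -1) → 0 ≤ k →
      ¬ ((k = 0 ∧ ε = -1) ∨ (k = 1 ∧ ε = -1)) →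
      IsDefective 5 (assocFst (psi (k - 2 * ε)) (psi (k - 2 * ε) - 4 * psi k))
        (assocSnd (psi (k - 2 * ε)) (psi (k - 2 * ε) - 4 * psi k))) := by
  have not_isUnit {q : ℤ} (hq : 2 ≤ q) : ¬ IsUnit q := by rw [Int.isUnit_iff]; omega
  constructor
  · intro k ε hε hk
    have hq : 2 ≤ phi k := two_le_phi hk
    exact isDefective_five_assoc_of_fib_rec (u := phiAux) (fun _ ↦ rfl) (by decide) (by omega)
      (two_pos.trans_le hq).ne' (absurd · (not_isUnit hq))
  · intro k ε hε hk hkε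
    by_cases hk1 : k = 1
    · obtain rfl : ε = 1 := by omega
      subst hk1
      exact isDefective_five_assoc (by decide) (by decide) (by decide)
    · have hq : 2 ≤ psi k := two_le_psi hk hk1
      exact isDefective_five_assoc_of_fib_rec (u := psiAux) (fun _ ↦ rfl) (by decide) (by omega)
        (two_pos.trans_le hq).ne' (absurd · (not_isUnit hq))
end

section
/- Let a, b be integers such that the pair associated with (a,b) is a Lehmer pair. Then the pair associated with (b,a) is also a Lehmer pair, and the Lehmer pair associated with (a,b) is 10-defective if and only if the Lehmer pair associated with (b,a) is 5-defective. -/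
open Complex

/-!
Fix a prime `ℓ` and reduce modulo `ℓ`: choose `x`, `y` in an algebraic closure of `𝔽_ℓ` with
`(x + y) ^ 2` and `x * y` the reductions of the integers `(α + β) ^ 2` and `α * β`. As long as
`x ^ 2 ≠ y ^ 2`, the prime `ℓ` divides `ũ_k(α, β)` exactly when `x ^ k = y ^ k`, so for `n > 2` it
is a primitive divisor of `ũ_n(α, β)` exactly when `x / y` has multiplicative order `n`. Swapping
`a` and `b` replaces `α` by `-α`, hence `x / y` by `-(x / y)`, and in odd characteristic, for odd
`n`, an element has order `2 * n` exactly when its negative has order `n`. In characteristic two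
the order of `x / y` is at most three, so `2` is never a primitive divisor when `n > 3`.
-/

open Polynomial in
lemma exists_add_eq_and_mul_eq {k : Type*} [Field k] [IsAlgClosed k] (s q : k) :
    ∃ x y : k, x + y = s ∧ x * y = q := by
  obtain ⟨x, hx⟩ := IsAlgClosed.exists_root (C 1 * X ^ 2 + C (-s) * X + C q)
    (by rw [degree_quadratic one_ne_zero]; decide)
  have h_root : x ^ 2 - s * x + q = 0 := by simpa [IsRoot.def, sub_eq_add_neg] using hx
  exact ⟨x, s - x, add_sub_cancel x s, by linear_combination -h_root⟩

section OrderOf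

lemma orderOf_eq_two_mul_of_orderOf_neg_eq {R : Type*} [Ring R] [Nontrivial R]
    (h2 : ringChar R ≠ 2) {n : ℕ} (hn : Odd n) {x : R} (hx : orderOf (-x) = n) :
    orderOf x = 2 * n := by
  have h_neg_one : orderOf (-1 : R) = 2 := by rw [orderOf_neg_one, if_neg h2]
  have h_coprime : (orderOf (-1 : R)).Coprime (orderOf (-x)) := by
    rw [h_neg_one, hx]
    exact hn.coprime_two_left
  have h_mul := (Commute.neg_one_left (-x)).orderOf_mul_eq_mul_orderOf_of_coprime h_coprime
  rwa [neg_one_mul, neg_neg, h_neg_one, hx] at h_mul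

lemma orderOf_eq_two_mul_iff_orderOf_neg_eq {R : Type*} [Ring R] [IsDomain R]
    (h2 : ringChar R ≠ 2) {n : ℕ} (hn : Odd n) {x : R} :
    orderOf x = 2 * n ↔ orderOf (-x) = n := by
  refine ⟨fun hx => ?_, orderOf_eq_two_mul_of_orderOf_neg_eq h2 hn⟩
  have h_pow_ne : x ^ n ≠ 1 := pow_ne_one_of_lt_orderOf hn.pos.ne' (by have := hn.pos; omega)
  have h_sq : (x ^ n) ^ 2 = 1 := by rw [← pow_mul, mul_comm, ← hx, pow_orderOf_eq_one]
  have h_pow : x ^ n = -1 := (sq_eq_one_iff.mp h_sq).resolve_left h_pow_ne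
  have h_dvd : orderOf (-x) ∣ n := orderOf_dvd_of_pow_eq_one (by rw [hn.neg_pow, h_pow, neg_neg])
  have h_order := orderOf_eq_two_mul_of_orderOf_neg_eq h2 (hn.of_dvd_nat h_dvd) rfl
  omega

lemma orderOf_div_eq_iff {G₀ : Type*} [CommGroupWithZero G₀] {n : ℕ} (hn : 1 < n) {x y : G₀} :
    orderOf (x / y) = n ↔ x ^ n = y ^ n ∧ ∀ k ∈ Finset.Ico 1 n, x ^ k ≠ y ^ k := by
  rcases eq_or_ne y 0 with rfl | hy
  · have h_order : orderOf (x / 0) ≠ n := by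
      rw [div_zero, orderOf_zero]
      omega
    refine iff_of_false h_order fun ⟨h_pow, h_ne⟩ => h_ne 1 (by simp [hn]) ?_
    rw [zero_pow (by omega)] at h_pow
    rw [pow_eq_zero_iff (by omega) |>.mp h_pow]
  · simp only [orderOf_eq_iff (zero_lt_one.trans hn), div_pow, Finset.mem_Ico, ne_eq,
      div_eq_one_iff_eq (pow_ne_zero _ hy)]
    grind

lemma orderOf_div_le_three_of_charTwo {F : Type*} [Field F] [CharP F 2] {x y : F} {p q : ℤ}
    (hp : (x + y) ^ 2 = p) (hq : x * y = q) : orderOf (x / y) ≤ 3 := by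
  rcases eq_or_ne y 0 with rfl | hy
  · simp
  rw [CharTwo.intCast_eq_ite] at hp hq
  split_ifs at hp hq with hp_even hq_even
  · simp [(mul_eq_zero.mp hq).resolve_right hy]
  · have h_eq : x = y := CharTwo.add_eq_zero.mp (pow_eq_zero_iff two_ne_zero |>.mp hp)
    simp [h_eq, hy]
  · simp [(mul_eq_zero.mp hq).resolve_right hy]
  · refine orderOf_le_of_pow_eq_one three_pos ?_
    rw [div_pow, div_eq_one_iff_eq (pow_ne_zero 3 hy)]
    linear_combination (x - y) * (hp - hq)

lemma orderOf_div_eq_two_mul_iff_orderOf_neg_div_eq {F : Type*} [Field F] {x y : F} {p q : ℤ}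
    (hp : (x + y) ^ 2 = p) (hq : x * y = q) {n : ℕ} (hn : Odd n) (h3 : 3 < n) :
    orderOf (x / y) = 2 * n ↔ orderOf (-x / y) = n := by
  rw [neg_div]
  by_cases h2 : ringChar F = 2
  · have : CharP F 2 := ringChar.of_eq h2
    have h_le := orderOf_div_le_three_of_charTwo hp hq
    rw [CharTwo.neg_eq]
    omega
  · exact orderOf_eq_two_mul_iff_orderOf_neg_eq h2 hn

end OrderOf

/-- The Lehmer numbers `ũ_n(α, β)` as integers, computed from `p = (α + β) ^ 2` and `q = α * β`
by the recurrence that `α ^ n - β ^ n` satisfies after division by `lehmerDenom α β n`. They can be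
reduced modulo a prime without reference to `α` and `β`. -/
def lehmerSeq (p q : ℤ) : ℕ → ℤ
  | 0 => 0
  | 1 => 1
  | n + 2 => (if Odd n then p else 1) * lehmerSeq p q (n + 1) - q * lehmerSeq p q n

/-- The denominator of the `n`-th Lehmer number, in any ring, so that it can be compared between
`ℂ` and a field of positive characteristic. -/
def lehmerDenom {R : Type*} [Ring R] (x y : R) (n : ℕ) : R :=
  if Odd n then x - y else x ^ 2 - y ^ 2

section LehmerSeq

variable {R : Type*} [CommRing R] {x y : R} {p q : ℤ}

lemma lehmerDenom_ne_zero (hxy : x ^ 2 ≠ y ^ 2) (n : ℕ) : lehmerDenom x y n ≠ 0 := by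
  rw [lehmerDenom]
  split_ifs
  · exact sub_ne_zero.mpr (ne_of_apply_ne (· ^ 2) hxy)
  · exact sub_ne_zero.mpr hxy

lemma lehmerSeq_mul_lehmerDenom (hp : (x + y) ^ 2 = p) (hq : x * y = q) (n : ℕ) :
    lehmerSeq p q n * lehmerDenom x y n = x ^ n - y ^ n := by
  induction n using Nat.twoStepInduction with
  | zero => simp [lehmerSeq]
  | one => simp [lehmerSeq, lehmerDenom]
  | more n ih ih' =>
    rcases Nat.even_or_odd n with hn | hn
    · rw [← Nat.not_odd_iff_even] at hn
      simp only [Nat.odd_add_one, hn, not_false_eq_true, not_true_eq_false, if_true, if_false,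
        lehmerSeq, lehmerDenom] at ih ih' ⊢
      push_cast
      linear_combination (x + y) * ih' - (q : R) * ih + (x ^ n - y ^ n) * hq
    · simp only [Nat.odd_add_one, hn, not_false_eq_true, not_true_eq_false, if_true, if_false,
        lehmerSeq, lehmerDenom] at ih ih' ⊢
      push_cast
      linear_combination (x + y) * ih' - (q : R) * ih + (x ^ n - y ^ n) * hq
        - (lehmerSeq p q (n + 1) : R) * (x - y) * hp

lemma lehmerSeq_cast_eq_zero_iff [IsDomain R] (hp : (x + y) ^ 2 = p) (hq : x * y = q)
    (hxy : x ^ 2 ≠ y ^ 2) (n : ℕ) : (lehmerSeq p q n : R) = 0 ↔ x ^ n = y ^ n := by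
  rw [← sub_eq_zero (a := x ^ n), ← lehmerSeq_mul_lehmerDenom hp hq, mul_eq_zero,
    or_iff_left (lehmerDenom_ne_zero hxy n)]

lemma sq_sub_sq_sq_eq_intCast (hp : (x + y) ^ 2 = p) (hq : x * y = q) :
    (x ^ 2 - y ^ 2) ^ 2 = (p * (p - 4 * q) : ℤ) := by
  push_cast
  rw [← hp, ← hq]
  ring

lemma neg_add_sq_eq_intCast (hp : (x + y) ^ 2 = p) (hq : x * y = q) :
    (-x + y) ^ 2 = (p - 4 * q : ℤ) := by
  push_cast
  rw [← hp, ← hq]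
  ring

lemma neg_mul_eq_intCast (hq : x * y = q) : -x * y = (-q : ℤ) := by
  rw [neg_mul, hq, Int.cast_neg]

end LehmerSeq

section PrimitiveDivisor

variable {α β : ℂ} {p q : ℤ} {n ℓ : ℕ}

lemma lehmerU_eq_lehmerSeq (hp : (α + β) ^ 2 = p) (hq : α * β = q) (hαβ : α ^ 2 ≠ β ^ 2) (n : ℕ) :
    lehmerU α β n = lehmerSeq p q n := by
  rw [eq_div_of_mul_eq (lehmerDenom_ne_zero hαβ n) (lehmerSeq_mul_lehmerDenom hp hq n), lehmerU,
    lehmerDenom]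
  split_ifs <;> rfl

lemma intDvd_intCast_iff_s18 (F : Type*) [AddGroupWithOne F] [CharP F ℓ] (m : ℤ) :
    IntDvd ℓ m ↔ (m : F) = 0 := by
  simp [IntDvd, CharP.intCast_eq_zero_iff F ℓ]

lemma isPrimitiveDivisor_iff_pow_eq_and_forall_pow_ne (hp : (α + β) ^ 2 = p) (hq : α * β = q)
    (hαβ : α ^ 2 ≠ β ^ 2) (hℓ : ℓ.Prime) {F : Type*} [Field F] [CharP F ℓ] {x y : F}
    (hpF : (x + y) ^ 2 = p) (hqF : x * y = q) (hn : 2 < n) :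
    IsPrimitiveDivisor ℓ n α β ↔ x ^ n = y ^ n ∧ ∀ k ∈ Finset.Ico 1 n, x ^ k ≠ y ^ k := by
  simp only [IsPrimitiveDivisor, hℓ, true_and, lehmerU_eq_lehmerSeq hp hq hαβ,
    sq_sub_sq_sq_eq_intCast hp hq, ← Int.cast_prod, ← Int.cast_mul, intDvd_intCast_iff_s18 F]
  rw [Int.cast_mul, ← sq_sub_sq_sq_eq_intCast hpF hqF, Int.cast_prod, mul_eq_zero,
    sq_eq_zero_iff, sub_eq_zero, Finset.prod_eq_zero_iff]
  by_cases hxy : x ^ 2 = y ^ 2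
  · have h_two_mem : 2 ∈ Finset.Ico 1 n := by simp [hn]
    exact iff_of_false (fun h => h.2 (.inl hxy)) fun h => h.2 2 h_two_mem hxy
  · simp only [lehmerSeq_cast_eq_zero_iff hpF hqF hxy, hxy, false_or, not_exists, not_and, ne_eq]

lemma isPrimitiveDivisor_iff_orderOf_div_eq (hp : (α + β) ^ 2 = p) (hq : α * β = q)
    (hαβ : α ^ 2 ≠ β ^ 2) (hℓ : ℓ.Prime) {F : Type*} [Field F] [CharP F ℓ] {x y : F}
    (hpF : (x + y) ^ 2 = p) (hqF : x * y = q) (hn : 2 < n) :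
    IsPrimitiveDivisor ℓ n α β ↔ orderOf (x / y) = n := by
  rw [orderOf_div_eq_iff (one_lt_two.trans hn),
    isPrimitiveDivisor_iff_pow_eq_and_forall_pow_ne hp hq hαβ hℓ hpF hqF hn]

lemma isPrimitiveDivisor_two_mul_iff_neg_left (hp : (α + β) ^ 2 = p) (hq : α * β = q)
    (hαβ : α ^ 2 ≠ β ^ 2) (hn : Odd n) (h3 : 3 < n) :
    IsPrimitiveDivisor ℓ (2 * n) α β ↔ IsPrimitiveDivisor ℓ n (-α) β := by
  by_cases hℓ : ℓ.Prime
  · have : Fact ℓ.Prime := ⟨hℓ⟩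
    let F := AlgebraicClosure (ZMod ℓ)
    have : CharP F ℓ := charP_of_injective_algebraMap (algebraMap (ZMod ℓ) F).injective ℓ
    obtain ⟨s, hs⟩ := IsAlgClosed.exists_pow_nat_eq (p : F) two_pos
    obtain ⟨x, y, h_add, hqF⟩ := exists_add_eq_and_mul_eq s (q : F)
    have hpF : (x + y) ^ 2 = p := by rw [h_add, hs]
    calc IsPrimitiveDivisor ℓ (2 * n) α β
        ↔ orderOf (x / y) = 2 * n :=
          isPrimitiveDivisor_iff_orderOf_div_eq hp hq hαβ hℓ hpF hqF (by omega)
      _ ↔ orderOf (-x / y) = n :=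
          orderOf_div_eq_two_mul_iff_orderOf_neg_div_eq hpF hqF hn h3
      _ ↔ IsPrimitiveDivisor ℓ n (-α) β :=
          (isPrimitiveDivisor_iff_orderOf_div_eq (neg_add_sq_eq_intCast hp hq)
            (neg_mul_eq_intCast hq) (by rwa [neg_sq]) hℓ (neg_add_sq_eq_intCast hpF hqF)
            (neg_mul_eq_intCast hqF) (by omega)).symm
  · exact iff_of_false (fun h => hℓ h.1) fun h => hℓ h.1

end PrimitiveDivisor

namespace IsLehmerPair

variable {α β : ℂ}

lemma right_ne_zero (h : IsLehmerPair α β) : β ≠ 0 := by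
  obtain ⟨-, -, ⟨p, q, -, hq, -, hq0, -⟩, -⟩ := h
  exact right_ne_zero_of_mul (hq.trans_ne (Int.cast_ne_zero.mpr hq0))

lemma sq_ne_sq_s18 (h : IsLehmerPair α β) : α ^ 2 ≠ β ^ 2 := fun h_sq =>
  h.2.2.2 ⟨2, two_pos, by rw [div_pow, h_sq, div_self (pow_ne_zero 2 h.right_ne_zero)]⟩

lemma neg_left (h : IsLehmerPair α β) : IsLehmerPair (-α) β := by
  have h_sq := h.sq_ne_sq_s18
  obtain ⟨hα, hβ, ⟨p, q, hp, hq, -, hq0, hpq⟩, h_root⟩ := h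
  have h_disc : p - 4 * q ≠ 0 := by
    intro h_zero
    have h_denom : (α ^ 2 - β ^ 2) ^ 2 = 0 := by
      rw [sq_sub_sq_sq_eq_intCast hp hq, h_zero, mul_zero, Int.cast_zero]
    exact h_sq (sub_eq_zero.mp (sq_eq_zero_iff.mp h_denom))
  have h_coprime : IsCoprime (p - 4 * q) (-q) := by
    rw [IsCoprime.neg_right_iff, sub_eq_add_neg, ← neg_mul]
    exact IsCoprime.add_mul_right_left hpq (-4)
  refine ⟨hα.neg, hβ, ⟨p - 4 * q, -q, neg_add_sq_eq_intCast hp hq, neg_mul_eq_intCast hq, h_disc,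
    neg_ne_zero.mpr hq0, h_coprime⟩, ?_⟩
  rintro ⟨n, hn, h_pow⟩
  refine h_root ⟨2 * n, by omega, ?_⟩
  rw [pow_mul, ← neg_sq, ← neg_div, ← pow_mul, mul_comm, pow_mul, h_pow, one_pow]

lemma isDefective_two_mul_iff_neg_left (h : IsLehmerPair α β) {n : ℕ} (hn : Odd n) (h3 : 3 < n) :
    IsDefective (2 * n) α β ↔ IsDefective n (-α) β := by
  have h_sq := h.sq_ne_sq_s18
  obtain ⟨p, q, hp, hq, -⟩ := h.2.2.1
  simp only [IsDefective, h, h.neg_left, true_and,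
    isPrimitiveDivisor_two_mul_iff_neg_left hp hq h_sq hn h3]

end IsLehmerPair

lemma assocFst_swap (a b : ℤ) : assocFst b a = -assocFst a b := by
  rw [assocFst, assocFst]
  ring

lemma assocSnd_swap (a b : ℤ) : assocSnd b a = assocSnd a b := by
  rw [assocSnd, assocSnd, add_comm]

theorem ten_defective_iff_swap_five_defective_general (a b : ℤ)
    (h : IsLehmerPair (assocFst a b) (assocSnd a b)) {n : ℕ} (hn : Odd n) (h3 : 3 < n) :
    IsLehmerPair (assocFst b a) (assocSnd b a) ∧
      (IsDefective (2 * n) (assocFst a b) (assocSnd a b) ↔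
        IsDefective n (assocFst b a) (assocSnd b a)) := by
  rw [assocFst_swap a b, assocSnd_swap a b]
  exact ⟨h.neg_left, h.isDefective_two_mul_iff_neg_left hn h3⟩

theorem ten_defective_iff_swap_five_defective (a b : ℤ)
    (h : IsLehmerPair (assocFst a b) (assocSnd a b)) :
    IsLehmerPair (assocFst b a) (assocSnd b a) ∧
      (IsDefective 10 (assocFst a b) (assocSnd a b) ↔
        IsDefective 5 (assocFst b a) (assocSnd b a)) :=
  ten_defective_iff_swap_five_defective_general a b h (n := 5) (by decide) (by decide)
end
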